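/- arXiv:2602.01882 — 2 statements merged into one kernel-verified Lean document; each statement's English description precedes it below -/
import Mathlib

section
/- Let q ≥ 0, r ≥ 1, and x ≥ 1 be integers, let F be a finite set with |F| ≥ q(r−1)+x, and let c : F → 𝒫({1,…,q}) assign to each element of F a set of colours. Then there exist a set I ⊆ {1,…,q} and a subset F' ⊆ F with |F'| ≥ |I|·(r−1)+x such that c(s) ⊆ I for every s ∈ F' and, for every i ∈ I, at least r elements s ∈ F' satisfy i ∈ c(s). -/
theorem sorting_aux (q r x : ℕ) (hr : 1 ≤ r) {α : Type} [DecidableEq α]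
    (c : α → Finset (Fin q)) (n : ℕ) :
    ∀ (J : Finset (Fin q)) (G : Finset α), J.card = n →
      J.card * (r - 1) + x ≤ G.card → (∀ s ∈ G, c s ⊆ J) →
    ∃ (I : Finset (Fin q)) (F' : Finset α), F' ⊆ G ∧
      I.card * (r - 1) + x ≤ F'.card ∧
      (∀ s ∈ F', c s ⊆ I) ∧
      (∀ i ∈ I, r ≤ (F'.filter (fun s => i ∈ c s)).card) := by
  induction n with
  | zero =>
    intro J G hJ hG hc
    refine ⟨J, G, subset_rfl, hG, hc, ?_⟩
    intro i hi
    rw [Finset.card_eq_zero.mp hJ] at hi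
    simp at hi
  | succ n ih =>
    intro J G hJ hG hc
    by_cases h : ∀ i ∈ J, r ≤ (G.filter (fun s => i ∈ c s)).card
    · exact ⟨J, G, subset_rfl, hG, hc, h⟩
    · push Not at h
      obtain ⟨i, hi, hlt⟩ := h
      have hcard : (J.erase i).card = n := by
        rw [Finset.card_erase_of_mem hi, hJ]
        rfl
      have hsplit := Finset.card_filter_add_card_filter_not (s := G) (fun s => i ∈ c s)
      obtain ⟨I, F', h1, h2, h3, h4⟩ := ih (J.erase i) (G.filter (fun s => ¬ i ∈ c s)) hcard
        (by
          rw [hcard]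
          rw [hJ, Nat.add_mul, Nat.one_mul] at hG
          omega)
        (by
          intro s hs j hj
          rw [Finset.mem_filter] at hs
          refine Finset.mem_erase.mpr ⟨?_, hc s hs.1 hj⟩
          rintro rfl
          exact hs.2 hj)
      exact ⟨I, F', h1.trans (Finset.filter_subset _ _), h2, h3, h4⟩

/-- **Sorting lemma.**  Let `q ≥ 0`, `r ≥ 1`, `x ≥ 1`, let `F` be a finite set
with `|F| ≥ q(r−1)+x` and let `c` assign to each element of `F` a set of
colours from `{1,…,q}` (modelled as `Fin q`).  Then there are `I ⊆ {1,…,q}`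
and `F' ⊆ F` with `|F'| ≥ |I|(r−1)+x` such that `c s ⊆ I` for every `s ∈ F'`
and each `i ∈ I` lies in `c s` for at least `r` elements `s ∈ F'`. -/
theorem sorting_lemma (q r x : ℕ) (hr : 1 ≤ r) (hx : 1 ≤ x)
    {α : Type} [DecidableEq α] (F : Finset α)
    (hF : q * (r - 1) + x ≤ F.card)
    (c : α → Finset (Fin q)) :
    ∃ (I : Finset (Fin q)) (F' : Finset α), F' ⊆ F ∧
      I.card * (r - 1) + x ≤ F'.card ∧
      (∀ s ∈ F', c s ⊆ I) ∧
      (∀ i ∈ I, r ≤ (F'.filter (fun s => i ∈ c s)).card) := by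
  exact sorting_aux q r x hr c q Finset.univ F (by simp) (by simpa using hF)
    (fun s _ => Finset.subset_univ _)
end

section
/- Let q ≥ 0, r ≥ 1, and x ≥ 1 be integers, let F be a finite set with |F| ≥ q(r−1)+x, and for each s ∈ F let c_s(0) ⊇ c_s(1) ⊇ … ⊇ c_s(q+1) be a decreasing chain of subsets of {1,…,q}. Then there exist an index j with 0 ≤ j ≤ q, a set I ⊆ {1,…,q}, and a subset F' ⊆ F with |F'| ≥ |I|·(r−1)+x such that c_s(j) ⊆ I for every s ∈ F' and, for every i ∈ I, at least r elements s ∈ F' satisfy i ∈ c_s(j+1). -/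
/-- **Sorting-and-trimming lemma.**  Let `q ≥ 0`, `r ≥ 1`, `x ≥ 1`, let `F` be
a finite set with `|F| ≥ q(r−1)+x` and, for each `s ∈ F`, let
`c s 0 ⊇ c s 1 ⊇ … ⊇ c s (q+1)` be a decreasing chain of subsets of
`{1,…,q}` (modelled as `Fin q`).  Then there are an index `j ≤ q`, a set
`I ⊆ {1,…,q}` and `F' ⊆ F` with `|F'| ≥ |I|(r−1)+x` such that `c s j ⊆ I` for
every `s ∈ F'` and each `i ∈ I` lies in `c s (j+1)` for at least `r` elements
`s ∈ F'`. -/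
theorem sorting_trimming_lemma (q r x : ℕ) (hr : 1 ≤ r) (hx : 1 ≤ x)
    {α : Type} [DecidableEq α] (F : Finset α)
    (hF : q * (r - 1) + x ≤ F.card)
    (c : α → ℕ → Finset (Fin q))
    (hchain : ∀ s, ∀ j ≤ q, c s (j + 1) ⊆ c s j) :
    ∃ j : ℕ, j ≤ q ∧
      ∃ (I : Finset (Fin q)) (F' : Finset α), F' ⊆ F ∧
        I.card * (r - 1) + x ≤ F'.card ∧
        (∀ s ∈ F', c s j ⊆ I) ∧
        (∀ i ∈ I, r ≤ (F'.filter (fun s => i ∈ c s (j + 1))).card) := by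
  have key : ∀ n j : ℕ, ∀ (I : Finset (Fin q)) (G : Finset α), I.card = n → j + n ≤ q →
      G ⊆ F → I.card * (r - 1) + x ≤ G.card → (∀ s ∈ G, c s j ⊆ I) →
      ∃ j : ℕ, j ≤ q ∧
        ∃ (I : Finset (Fin q)) (F' : Finset α), F' ⊆ F ∧
          I.card * (r - 1) + x ≤ F'.card ∧
          (∀ s ∈ F', c s j ⊆ I) ∧
          (∀ i ∈ I, r ≤ (F'.filter (fun s => i ∈ c s (j + 1))).card) := by
    intro n
    induction n with
    | zero =>
      intro j I G hI hj hG hc hs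
      refine ⟨j, by omega, I, G, hG, hc, hs, ?_⟩
      intro i hi
      rw [Finset.card_eq_zero] at hI
      simp [hI] at hi
    | succ n ih =>
      intro j I G hI hj hG hc hs
      by_cases h : ∀ i ∈ I, r ≤ (G.filter (fun s => i ∈ c s (j + 1))).card
      · exact ⟨j, by omega, I, G, hG, hc, hs, h⟩
      · push Not at h
        obtain ⟨i, hi, hlt⟩ := h
        have hI' : (I.erase i).card = n := by rw [Finset.card_erase_of_mem hi]; omega
        refine ih (j + 1) (I.erase i) (G.filter (fun s => ¬ i ∈ c s (j + 1))) hI' (by omega)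
          ((Finset.filter_subset _ _).trans hG) ?_ ?_
        · have hsum := Finset.card_filter_add_card_filter_not (s := G)
            (fun s => i ∈ c s (j + 1))
          rw [hI, Nat.succ_mul] at hc
          rw [hI']
          omega
        · intro s hsG
          rw [Finset.mem_filter] at hsG
          intro k hk
          refine Finset.mem_erase.2 ⟨?_, hs s hsG.1 (hchain s j (by omega) hk)⟩
          rintro rfl
          exact hsG.2 hk
  exact key q 0 Finset.univ F (by simp) (by omega) subset_rfl (by simpa using hF)
    (fun s _ => Finset.subset_univ _)
end
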